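/- Suppose 0<q<1, σ>0 and γ∈{0,1}. Then all zeros of the entire function z ↦ λ_{γ,σ}(z;q) are real and simple, and they occur in symmetric pairs ±z. -/

import Mathlib

noncomputable def qPochInf (a q : ℝ) : ℝ := ∏' k : ℕ, (1 - a * q ^ k)

noncomputable def qGamma (q x : ℝ) : ℝ :=
  qPochInf q q * (1 - q) ^ (1 - x) / qPochInf (q ^ x) q

noncomputable def qML (γ σ q : ℝ) (z : ℂ) : ℂ :=
  ∑' n : ℕ,
    (((-1) ^ n * σ ^ (2 * n) * q ^ (n * (n - 1)) / qGamma q (2 * n + γ + 1) : ℝ) : ℂ) * z ^ (2 * n)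

noncomputable def qMLR (γ σ q : ℝ) (x : ℝ) : ℝ :=
  ∑' n : ℕ,
    ((-1) ^ n * σ ^ (2 * n) * q ^ (n * (n - 1)) / qGamma q (2 * n + γ + 1)) * x ^ (2 * n)

def condR (q γ : ℝ) : Prop :=
  (γ = 0 ∨ γ = 1) ∨
    (γ ∈ Set.Ioo (0 : ℝ) 2 ∧ γ ≠ 1 ∧
      1 < q⁻¹ * (1 - q) * (1 - q ^ (γ + 1)) * (1 - q ^ (γ + 2)))

noncomputable def radiusStarlike (α : ℝ) (f : ℂ → ℂ) : ℝ :=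
  sSup {r : ℝ | 0 < r ∧ ∀ z : ℂ, 0 < ‖z‖ → ‖z‖ < r →
    α < (z * deriv f z / f z).re}

noncomputable def radiusConvex (α : ℝ) (f : ℂ → ℂ) : ℝ :=
  sSup {r : ℝ | 0 < r ∧ ∀ z : ℂ, ‖z‖ < r →
    α < (1 + z * deriv (deriv f) z / deriv f z).re}

noncomputable def fML (γ σ q : ℝ) (z : ℂ) : ℂ :=
  Complex.exp ((1 / ((γ : ℂ) + 1)) *
    Complex.log (z ^ ((γ : ℂ) + 1) * (qGamma q (γ + 1) : ℂ) * qML γ σ q z))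

noncomputable def gML (γ σ q : ℝ) (z : ℂ) : ℂ :=
  z * (qGamma q (γ + 1) : ℂ) * qML γ σ q z

noncomputable def hML (γ σ q : ℝ) (z : ℂ) : ℂ :=
  z * (qGamma q (γ + 1) : ℂ) *
    ∑' n : ℕ,
      (((-1) ^ n * σ ^ (2 * n) * q ^ (n * (n - 1)) / qGamma q (2 * n + γ + 1) : ℝ) : ℂ) * z ^ n

noncomputable def hMLR (γ σ q : ℝ) (x : ℝ) : ℝ :=
  x * qGamma q (γ + 1) *
    ∑' n : ℕ,
      ((-1) ^ n * σ ^ (2 * n) * q ^ (n * (n - 1)) / qGamma q (2 * n + γ + 1)) * x ^ n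

/-!
Both `λ_{0,σ}` and `λ_{1,σ}` are, up to a constant, `F ((σ (1 - q) z) ^ 2)` for a Hahn–Exton
`q`-Bessel function `F = ₁φ₁(0; b; p; ·)` with `p = q ^ 2` and `0 < b < 1`. Its second-order
`p`-difference equation gives, by iteration, the Lagrange identity
`F u * F (p v) - F (p u) * F v = (v - u) * ∑ b ^ k * F (p ^ (k + 1) u) * F (p ^ (k + 1) v)`.
The sum is positive for `v = conj u`, so a zero `u` of `F` is real; dividing by `v - u` and letting
`v → u` shows that it is simple. Finally, all terms of the series of `F` are nonnegative on the
negative half-line, so the zeros are positive.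
-/

open Filter Topology ComplexConjugate ComplexOrder

section Lagrange

/-- The `q`-Casorati determinant (discrete Wronskian) of `w ↦ F (w * u)` and `w ↦ F (w * v)`,
with base `p`, at `w = 1`. -/
def qCasorati (p : ℂ) (F : ℂ → ℂ) (u v : ℂ) : ℂ := F u * F (p * v) - F (p * u) * F v

/-- The second-order `p`-difference equation satisfied by `₁φ₁(0; b; p; ·)`. -/
def IsQPhiSolution (b p : ℂ) (F : ℂ → ℂ) : Prop :=
  ∀ w, p * F w = (p + b - p * w) * F (p * w) - b * F (p * (p * w))

/-- The kernel `∑ b ^ k * F (p ^ (k + 1) u) * F (p ^ (k + 1) v)` of the Lagrange identity, a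
Jackson integral of `w ↦ F (w * u) * F (w * v)`. -/
noncomputable def lagrangeKernel (b p : ℂ) (F : ℂ → ℂ) (u v : ℂ) : ℂ :=
  ∑' k : ℕ, b ^ k * (F (p ^ (k + 1) * u) * F (p ^ (k + 1) * v))

variable {b p : ℂ} {F : ℂ → ℂ}

theorem norm_ofReal_lt_one {x : ℝ} (hx0 : 0 < x) (hx1 : x < 1) : ‖(x : ℂ)‖ < 1 := by
  rwa [Complex.norm_of_nonneg hx0.le]

theorem tendsto_comp_pow_mul (hp : ‖p‖ < 1) (hF : ContinuousAt F 0) (w : ℂ) :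
    Tendsto (fun n : ℕ => F (p ^ n * w)) atTop (𝓝 (F 0)) := by
  have h := (tendsto_pow_atTop_nhds_zero_of_norm_lt_one hp).mul_const w
  rw [zero_mul] at h
  exact hF.tendsto.comp h

theorem exists_norm_comp_pow_mul_le (hp : ‖p‖ < 1) (hF : Continuous F) (R : ℝ) :
    ∃ M, ∀ w, ‖w‖ ≤ R → ∀ n : ℕ, ‖F (p ^ n * w)‖ ≤ M := by
  obtain ⟨M, hM⟩ :=
    (isCompact_closedBall (0 : ℂ) R).exists_bound_of_continuousOn hF.continuousOn
  refine ⟨M, fun w hw n => hM _ ?_⟩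
  rw [mem_closedBall_zero_iff, norm_mul, norm_pow]
  exact (mul_le_of_le_one_left (norm_nonneg w) (pow_le_one₀ (norm_nonneg p) hp.le)).trans hw

theorem exists_norm_lagrangeKernel_term_le (hp : ‖p‖ < 1) (hF : Continuous F) (R : ℝ) :
    ∃ M, ∀ u v, ‖u‖ ≤ R → ‖v‖ ≤ R → ∀ k : ℕ,
      ‖b ^ k * (F (p ^ (k + 1) * u) * F (p ^ (k + 1) * v))‖ ≤ ‖b‖ ^ k * (M * M) := by
  obtain ⟨M, hM⟩ := exists_norm_comp_pow_mul_le hp hF R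
  refine ⟨M, fun u v hu hv k => ?_⟩
  rw [norm_mul, norm_pow, norm_mul]
  have hM0 : 0 ≤ M := (norm_nonneg _).trans (hM u hu 0)
  gcongr
  exacts [hM u hu _, hM v hv _]

theorem summable_lagrangeKernel (hb : ‖b‖ < 1) (hp : ‖p‖ < 1) (hF : Continuous F) (u v : ℂ) :
    Summable fun k : ℕ => b ^ k * (F (p ^ (k + 1) * u) * F (p ^ (k + 1) * v)) := by
  obtain ⟨M, hM⟩ := exists_norm_lagrangeKernel_term_le (b := b) hp hF (max ‖u‖ ‖v‖)
  exact .of_norm_bounded ((summable_geometric_of_lt_one (norm_nonneg b) hb).mul_right (M * M))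
    (hM u v (le_max_left _ _) (le_max_right _ _))

theorem differentiable_lagrangeKernel (hb : ‖b‖ < 1) (hp : ‖p‖ < 1) (hF : Differentiable ℂ F)
    (u : ℂ) : Differentiable ℂ (lagrangeKernel b p F u) := by
  intro v
  set R := max ‖u‖ (‖v‖ + 1)
  obtain ⟨M, hM⟩ := exists_norm_lagrangeKernel_term_le (b := b) hp hF.continuous R
  have hdiff : DifferentiableOn ℂ (lagrangeKernel b p F u) (Metric.ball 0 R) :=
    Complex.differentiableOn_tsum_of_summable_norm
      ((summable_geometric_of_lt_one (norm_nonneg b) hb).mul_right (M * M))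
      (fun k => by fun_prop) Metric.isOpen_ball
      fun k w hw => hM u w (le_max_left _ _) (mem_ball_zero_iff.1 hw).le k
  have hv : v ∈ Metric.ball (0 : ℂ) R :=
    mem_ball_zero_iff.2 ((lt_add_one ‖v‖).trans_le (le_max_right _ _))
  exact hdiff.differentiableAt (Metric.isOpen_ball.mem_nhds hv)

theorem lagrangeKernel_conj_ne_zero {b p : ℝ} (hb0 : 0 < b) (hb1 : b < 1) (hp0 : 0 < p)
    (hp1 : p < 1) (hF : Continuous F) (hconj : ∀ w, F (conj w) = conj (F w)) (h0 : F 0 ≠ 0)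
    (w : ℂ) : lagrangeKernel b p F w (conj w) ≠ 0 := by
  have hb := norm_ofReal_lt_one hb0 hb1
  have hp := norm_ofReal_lt_one hp0 hp1
  have hterm (k : ℕ) : (b : ℂ) ^ k * (F (p ^ (k + 1) * w) * F (p ^ (k + 1) * conj w)) =
      (b ^ k * ‖F (p ^ (k + 1) * w)‖ ^ 2 : ℝ) := by
    have : (p : ℂ) ^ (k + 1) * conj w = conj ((p : ℂ) ^ (k + 1) * w) := by simp
    rw [this, hconj, Complex.mul_conj']
    push_cast
    rfl
  obtain ⟨k, hk⟩ : ∃ k : ℕ, F (p ^ (k + 1) * w) ≠ 0 :=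
    (((tendsto_comp_pow_mul hp hF.continuousAt w).comp (tendsto_add_atTop_nat 1)).eventually_ne
      h0).exists
  have hsum := summable_lagrangeKernel hb hp hF w (conj w)
  simp only [hterm] at hsum
  rw [lagrangeKernel, tsum_congr hterm, ← Complex.ofReal_tsum, Complex.ofReal_ne_zero]
  exact ((Complex.summable_ofReal.1 hsum).tsum_pos (fun _ => by positivity) k
    (by positivity)).ne'

theorem tendsto_div_pow_mul_qCasorati (hb : ‖b‖ < 1) (hp : ‖p‖ < 1) (hp0 : p ≠ 0)
    (hF : Differentiable ℂ F) (u v : ℂ) :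
    Tendsto (fun n : ℕ => (b / p) ^ n * qCasorati p F (p ^ n * u) (p ^ n * v)) atTop (𝓝 0) := by
  have hdiff : DifferentiableAt ℂ (fun t => qCasorati p F (t * u) (t * v)) 0 := by
    unfold qCasorati
    fun_prop
  have hpow : Tendsto (fun n : ℕ => p ^ n) atTop (𝓝[≠] 0) :=
    tendsto_nhdsWithin_iff.2
      ⟨tendsto_pow_atTop_nhds_zero_of_norm_lt_one hp, .of_forall fun n => pow_ne_zero n hp0⟩
  have hslope := hdiff.hasDerivAt.tendsto_slope.comp hpow
  have hlim := (tendsto_pow_atTop_nhds_zero_of_norm_lt_one hb).mul hslope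
  rw [zero_mul] at hlim
  refine hlim.congr fun n => ?_
  have hzero : qCasorati p F 0 0 = 0 := by simp [qCasorati]
  simp only [Function.comp_apply, slope_def_field, zero_mul, hzero, sub_zero, div_pow]
  ring

namespace IsQPhiSolution

theorem qCasorati_eq (h : IsQPhiSolution b p F) (hp0 : p ≠ 0) (u v : ℂ) :
    qCasorati p F u v =
      b / p * qCasorati p F (p * u) (p * v) + (v - u) * (F (p * u) * F (p * v)) := by
  have hcancel : p * (b / p) = b := mul_div_cancel₀ b hp0
  apply mul_left_cancel₀ hp0
  unfold qCasorati
  linear_combination F (p * v) * h u - F (p * u) * h v -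
    (F (p * u) * F (p * (p * v)) - F (p * (p * u)) * F (p * v)) * hcancel

theorem qCasorati_eq_sum (h : IsQPhiSolution b p F) (hp0 : p ≠ 0) (u v : ℂ) (n : ℕ) :
    qCasorati p F u v = (b / p) ^ n * qCasorati p F (p ^ n * u) (p ^ n * v) +
      (v - u) * ∑ k ∈ Finset.range n, b ^ k * (F (p ^ (k + 1) * u) * F (p ^ (k + 1) * v)) := by
  induction n with
  | zero => simp
  | succ n ih =>
    have hb : (b / p) ^ n * p ^ n = b ^ n := by rw [← mul_pow, div_mul_cancel₀ _ hp0]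
    rw [ih, h.qCasorati_eq hp0 (p ^ n * u), Finset.sum_range_succ, ← hb]
    simp only [← mul_assoc, ← pow_succ']
    ring

theorem qCasorati_eq_sub_mul_lagrangeKernel (h : IsQPhiSolution b p F) (hb : ‖b‖ < 1)
    (hp : ‖p‖ < 1) (hp0 : p ≠ 0) (hF : Differentiable ℂ F) (u v : ℂ) :
    qCasorati p F u v = (v - u) * lagrangeKernel b p F u v := by
  have hsum := (summable_lagrangeKernel hb hp hF.continuous u v).hasSum.tendsto_sum_nat
  have hlim := (tendsto_div_pow_mul_qCasorati hb hp hp0 hF u v).add (hsum.const_mul (v - u))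
  rw [zero_add] at hlim
  refine tendsto_nhds_unique (tendsto_const_nhds.congr fun n => ?_) hlim
  exact h.qCasorati_eq_sum hp0 u v n

theorem lagrangeKernel_self (h : IsQPhiSolution b p F) (hb : ‖b‖ < 1) (hp : ‖p‖ < 1)
    (hp0 : p ≠ 0) (hF : Differentiable ℂ F) (u : ℂ) :
    lagrangeKernel b p F u u = F u * (p * deriv F (p * u)) - F (p * u) * deriv F u := by
  have hleft : HasDerivAt (qCasorati p F u)
      (F u * (p * deriv F (p * u)) - F (p * u) * deriv F u) u := by
    have hcomp : HasDerivAt (fun v => F (p * v)) (p * deriv F (p * u)) u := by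
      simpa [Function.comp_def, mul_comm] using
        (hF (p * u)).hasDerivAt.comp u ((hasDerivAt_id u).const_mul p)
    exact (hcomp.const_mul (F u)).sub ((hF u).hasDerivAt.const_mul (F (p * u)))
  have hright : HasDerivAt (qCasorati p F u) (lagrangeKernel b p F u u) u := by
    rw [funext (h.qCasorati_eq_sub_mul_lagrangeKernel hb hp hp0 hF u)]
    simpa using ((hasDerivAt_id u).sub_const u).fun_mul
      (differentiable_lagrangeKernel hb hp hF u u).hasDerivAt
  exact hright.unique hleft

section Real

variable {b p : ℝ} (h : IsQPhiSolution b p F) (hb0 : 0 < b) (hb1 : b < 1) (hp0 : 0 < p)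
  (hp1 : p < 1) (hF : Differentiable ℂ F) (hconj : ∀ w, F (conj w) = conj (F w)) (h0 : F 0 ≠ 0)
include h hb0 hb1 hp0 hp1 hF hconj h0

theorem conj_eq_self_of_eq_zero {w : ℂ} (hw : F w = 0) : conj w = w := by
  have hW := h.qCasorati_eq_sub_mul_lagrangeKernel (norm_ofReal_lt_one hb0 hb1)
    (norm_ofReal_lt_one hp0 hp1) (by exact_mod_cast hp0.ne') hF w (conj w)
  have hW0 : qCasorati p F w (conj w) = 0 := by simp [qCasorati, hconj, hw]
  rw [hW0, eq_comm, mul_eq_zero] at hW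
  exact sub_eq_zero.1 (hW.resolve_right
    (lagrangeKernel_conj_ne_zero hb0 hb1 hp0 hp1 hF.continuous hconj h0 w))

theorem deriv_ne_zero_of_eq_zero {w : ℂ} (hw : F w = 0) : deriv F w ≠ 0 := by
  intro hderiv
  have hne := lagrangeKernel_conj_ne_zero hb0 hb1 hp0 hp1 hF.continuous hconj h0 w
  rw [h.conj_eq_self_of_eq_zero hb0 hb1 hp0 hp1 hF hconj h0 hw,
    h.lagrangeKernel_self (norm_ofReal_lt_one hb0 hb1)
      (norm_ofReal_lt_one hp0 hp1) (by exact_mod_cast hp0.ne') hF] at hne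
  simp [hw, hderiv] at hne

end Real

end IsQPhiSolution

end Lagrange

section QPhi

theorem mul_pow_ne_one {𝕜 : Type*} [NormedField 𝕜] {b p : 𝕜} (hb : ‖b‖ < 1) (hp : ‖p‖ ≤ 1)
    (n : ℕ) : b * p ^ n ≠ 1 := by
  intro h
  have hlt : ‖b * p ^ n‖ < 1 := by
    rw [norm_mul, norm_pow]
    exact (mul_le_of_le_one_right (norm_nonneg b) (pow_le_one₀ (norm_nonneg p) hp)).trans_lt hb
  rw [h, norm_one] at hlt
  exact hlt.false

/-- The `n`-th Taylor coefficient of the basic hypergeometric function `₁φ₁(0; b; p; ·)`. -/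
def qPhiCoeff {𝕜 : Type*} [Field 𝕜] (b p : 𝕜) (n : ℕ) : 𝕜 :=
  (-1) ^ n * p ^ n.choose 2 / ∏ k ∈ Finset.range n, (1 - b * p ^ k) * (1 - p ^ (k + 1))

/-- The basic hypergeometric function `₁φ₁(0; b; p; ·)`, which is the Hahn–Exton `q`-Bessel
function up to normalization. -/
noncomputable def qPhi (b p w : ℂ) : ℂ := ∑' n : ℕ, qPhiCoeff b p n * w ^ n

theorem qPhiCoeff_succ {𝕜 : Type*} [Field 𝕜] (b p : 𝕜) (n : ℕ) :
    qPhiCoeff b p (n + 1) =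
      -p ^ n / ((1 - b * p ^ n) * (1 - p ^ (n + 1))) * qPhiCoeff b p n := by
  rw [qPhiCoeff, qPhiCoeff, Finset.prod_range_succ, Nat.choose_succ_succ' n 1,
    Nat.choose_one_right, div_mul_div_comm, mul_comm (∏ k ∈ Finset.range n, _)]
  congr 1
  ring

theorem ofReal_qPhiCoeff (b p : ℝ) (n : ℕ) :
    ((qPhiCoeff b p n : ℝ) : ℂ) = qPhiCoeff (b : ℂ) p n := by
  simp [qPhiCoeff]

theorem qPhi_zero (b p : ℂ) : qPhi b p 0 = 1 := by
  rw [qPhi, tsum_eq_single 0 fun n hn => by simp [hn]]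
  simp [qPhiCoeff]

theorem qPhi_conj (b p : ℝ) (w : ℂ) : qPhi b p (conj w) = conj (qPhi b p w) := by
  simp only [qPhi, Complex.conj_tsum, map_mul, map_pow, ← ofReal_qPhiCoeff, Complex.conj_ofReal]

section Entire

variable {b p : ℂ} (hb : ∀ n : ℕ, b * p ^ n ≠ 1) (hp : ‖p‖ < 1) (hp0 : p ≠ 0)
include hb hp

theorem qPhiCoeff_denom_ne_zero (n : ℕ) : (1 - b * p ^ n) * (1 - p ^ (n + 1)) ≠ 0 := by
  rw [pow_succ']
  exact mul_ne_zero (sub_ne_zero.2 (hb n).symm) (sub_ne_zero.2 (mul_pow_ne_one hp hp.le n).symm)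

theorem qPhiCoeff_denom_mul_succ (n : ℕ) :
    (1 - b * p ^ n) * (1 - p ^ (n + 1)) * qPhiCoeff b p (n + 1) = -p ^ n * qPhiCoeff b p n := by
  rw [qPhiCoeff_succ, ← mul_assoc, mul_div_cancel₀ _ (qPhiCoeff_denom_ne_zero hb hp n)]

include hp0

theorem radius_ofScalars_qPhiCoeff :
    (FormalMultilinearSeries.ofScalars ℂ (qPhiCoeff b p)).radius = ⊤ := by
  have hcoeff (n : ℕ) : qPhiCoeff b p n ≠ 0 :=
    div_ne_zero (by simp [hp0])
      (Finset.prod_ne_zero_iff.2 fun k _ => qPhiCoeff_denom_ne_zero hb hp k)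
  have hpow := tendsto_pow_atTop_nhds_zero_of_norm_lt_one hp
  have hratio : Tendsto (fun n => qPhiCoeff b p (n + 1) / qPhiCoeff b p n) atTop (𝓝 0) := by
    have hden := ((hpow.const_mul b).const_sub 1).mul
      ((hpow.comp (tendsto_add_atTop_nat 1)).const_sub 1)
    have hlim := hpow.neg.div hden (by simp)
    simp only [neg_zero, zero_div] at hlim
    refine hlim.congr fun n => ?_
    rw [qPhiCoeff_succ, mul_div_cancel_right₀ _ (hcoeff n)]
    rfl
  refine FormalMultilinearSeries.ofScalars_radius_eq_top_of_tendsto ℂ _ (.of_forall hcoeff) ?_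
  simpa using hratio.norm

theorem hasFPowerSeriesOnBall_qPhi :
    HasFPowerSeriesOnBall (qPhi b p)
      (FormalMultilinearSeries.ofScalars ℂ (qPhiCoeff b p)) 0 ⊤ := by
  have hradius := radius_ofScalars_qPhiCoeff hb hp hp0
  have hsum : qPhi b p = (FormalMultilinearSeries.ofScalars ℂ (qPhiCoeff b p)).sum :=
    (FormalMultilinearSeries.ofScalarsSum_eq_tsum (E := ℂ) (qPhiCoeff b p)).symm
  rw [hsum, ← hradius]
  exact FormalMultilinearSeries.hasFPowerSeriesOnBall _ (by simp [hradius])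

theorem differentiable_qPhi : Differentiable ℂ (qPhi b p) := by
  have h := (hasFPowerSeriesOnBall_qPhi hb hp hp0).differentiableOn
  rwa [Metric.eball_top, differentiableOn_univ] at h

theorem hasSum_qPhi (w : ℂ) : HasSum (fun n => qPhiCoeff b p n * w ^ n) (qPhi b p w) := by
  simpa [FormalMultilinearSeries.ofScalars_apply_eq, mul_comm] using
    (hasFPowerSeriesOnBall_qPhi hb hp hp0).hasSum (y := w) (by simp)

theorem isQPhiSolution_qPhi : IsQPhiSolution b p (qPhi b p) := by
  intro w
  have hsum := hasSum_qPhi hb hp hp0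
  have hleft := (((hsum w).mul_left p).sub ((hsum (p * w)).mul_left (p + b))).add
    ((hsum (p * (p * w))).mul_left b)
  have hright := (hsum (p * w)).mul_left (-(p * w))
  rw [← hasSum_nat_add_iff' 1] at hleft
  have hterm (n : ℕ) : p * (qPhiCoeff b p (n + 1) * w ^ (n + 1)) -
      (p + b) * (qPhiCoeff b p (n + 1) * (p * w) ^ (n + 1)) +
      b * (qPhiCoeff b p (n + 1) * (p * (p * w)) ^ (n + 1)) =
      -(p * w) * (qPhiCoeff b p n * (p * w) ^ n) := by
    linear_combination p * w ^ (n + 1) * qPhiCoeff_denom_mul_succ hb hp n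
  simp only [hterm, Finset.sum_range_one, pow_zero] at hleft
  linear_combination hleft.unique hright

end Entire

section Zeros

variable {b p : ℝ}

theorem neg_one_pow_mul_qPhiCoeff_nonneg (hb : b ≤ 1) (hp0 : 0 ≤ p) (hp1 : p ≤ 1) (n : ℕ) :
    0 ≤ (-1) ^ n * qPhiCoeff b p n := by
  have hfactor (k : ℕ) : 0 ≤ (1 - b * p ^ k) * (1 - p ^ (k + 1)) :=
    have hpow := mul_le_of_le_one_left (pow_nonneg hp0 k) hb
    mul_nonneg (sub_nonneg.2 (hpow.trans (pow_le_one₀ hp0 hp1)))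
      (sub_nonneg.2 (pow_le_one₀ hp0 hp1))
  rw [qPhiCoeff, mul_div_assoc, ← mul_assoc, ← mul_pow, neg_one_mul, neg_neg, one_pow, one_mul]
  exact div_nonneg (pow_nonneg hp0 _) (Finset.prod_nonneg fun k _ => hfactor k)

variable (hb0 : 0 < b) (hb1 : b < 1) (hp0 : 0 < p) (hp1 : p < 1)
include hb0 hb1 hp0 hp1

theorem qPhi_pos_of_nonpos {w : ℂ} (hw : w ≤ 0) : 0 < qPhi b p w := by
  have hp := norm_ofReal_lt_one hp0 hp1
  have hb := norm_ofReal_lt_one hb0 hb1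
  have hsum := hasSum_qPhi (mul_pow_ne_one hb hp.le) hp (by exact_mod_cast hp0.ne') w
  have hterm (n : ℕ) : 0 ≤ qPhiCoeff (b : ℂ) p n * w ^ n := by
    have hcoeff : (0 : ℂ) ≤ ((-1) ^ n * qPhiCoeff b p n : ℝ) := by
      exact_mod_cast neg_one_pow_mul_qPhiCoeff_nonneg hb1.le hp0.le hp1.le n
    have hsign : qPhiCoeff (b : ℂ) p n * w ^ n =
        ((-1) ^ n * qPhiCoeff b p n : ℝ) * (-w) ^ n := by
      rw [Complex.ofReal_mul, ofReal_qPhiCoeff, mul_right_comm, Complex.ofReal_pow,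
        Complex.ofReal_neg, Complex.ofReal_one, ← mul_pow, neg_one_mul, neg_neg, mul_comm]
    rw [hsign]
    exact mul_nonneg hcoeff (pow_nonneg (neg_nonneg.2 hw) n)
  exact hsum.summable.tsum_pos hterm 0 (by simp [qPhiCoeff])

theorem pos_of_qPhi_eq_zero {w : ℂ} (hw : qPhi b p w = 0) : 0 < w := by
  have hb := norm_ofReal_lt_one hb0 hb1
  have hp := norm_ofReal_lt_one hp0 hp1
  have hpole := mul_pow_ne_one hb hp.le
  have hp0' : (p : ℂ) ≠ 0 := Complex.ofReal_ne_zero.2 hp0.ne'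
  have hreal : conj w = w :=
    (isQPhiSolution_qPhi hpole hp hp0').conj_eq_self_of_eq_zero hb0 hb1 hp0 hp1
      (differentiable_qPhi hpole hp hp0') (qPhi_conj b p) (by simp [qPhi_zero]) hw
  obtain ⟨t, rfl⟩ := Complex.conj_eq_iff_real.1 hreal
  have hnonpos : ¬ (t : ℂ) ≤ 0 := fun ht => (qPhi_pos_of_nonpos hb0 hb1 hp0 hp1 ht).ne' hw
  exact Complex.zero_lt_real.2 (not_le.1 (mt Complex.real_le_real.2 hnonpos))

theorem deriv_qPhi_ne_zero_of_eq_zero {w : ℂ} (hw : qPhi b p w = 0) :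
    deriv (qPhi b p) w ≠ 0 := by
  have hp := norm_ofReal_lt_one hp0 hp1
  have hpole := mul_pow_ne_one (norm_ofReal_lt_one hb0 hb1) hp.le
  have hp0' : (p : ℂ) ≠ 0 := Complex.ofReal_ne_zero.2 hp0.ne'
  exact (isQPhiSolution_qPhi hpole hp hp0').deriv_ne_zero_of_eq_zero hb0 hb1 hp0 hp1
    (differentiable_qPhi hpole hp hp0') (qPhi_conj b p) (by simp [qPhi_zero]) hw

end Zeros

end QPhi

section QGamma

variable {a q x : ℝ}

theorem summable_neg_mul_pow (hq : |q| < 1) : Summable fun k : ℕ => -(a * q ^ k) :=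
  ((summable_geometric_of_abs_lt_one hq).mul_left a).neg

theorem qPochInf_ne_zero (ha : |a| < 1) (hq : |q| < 1) : qPochInf a q ≠ 0 := by
  simp only [qPochInf, sub_eq_add_neg]
  refine tprod_one_add_ne_zero_of_summable (fun k => ?_) (summable_neg_mul_pow hq).norm
  rw [← sub_eq_add_neg]
  exact sub_ne_zero.2 (mul_pow_ne_one ha hq.le k).symm

theorem qPochInf_eq_mul (hq : |q| < 1) : qPochInf a q = (1 - a) * qPochInf (a * q) q := by
  have hshift (k : ℕ) : 1 - a * q ^ (k + 1) = 1 - a * q * q ^ k := by ring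
  have hmul : Multipliable fun k : ℕ => 1 - a * q ^ (k + 1) := by
    simp only [hshift, sub_eq_add_neg]
    exact Real.multipliable_one_add_of_summable (summable_neg_mul_pow hq)
  rw [qPochInf, tprod_eq_zero_mul' (f := fun k => 1 - a * q ^ k) hmul, tprod_congr hshift, pow_zero,
    mul_one, qPochInf]

variable (hq0 : 0 < q) (hq1 : q < 1)
include hq0 hq1

theorem qPochInf_rpow_ne_zero (hx : 0 < x) : qPochInf (q ^ x) q ≠ 0 :=
  qPochInf_ne_zero
    (by rw [abs_of_pos (Real.rpow_pos_of_pos hq0 x)]; exact Real.rpow_lt_one hq0.le hq1 hx)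
    (by rwa [abs_of_pos hq0])

theorem qGamma_ne_zero (hx : 0 < x) : qGamma q x ≠ 0 := by
  have hnum : qPochInf q q ≠ 0 := by
    simpa using qPochInf_rpow_ne_zero hq0 hq1 one_pos
  have hpow : (1 - q) ^ (1 - x) ≠ 0 := (Real.rpow_pos_of_pos (sub_pos.2 hq1) _).ne'
  exact div_ne_zero (mul_ne_zero hnum hpow) (qPochInf_rpow_ne_zero hq0 hq1 hx)

theorem qGamma_add_one (hx : 0 < x) :
    qGamma q (x + 1) * (1 - q) = qGamma q x * (1 - q ^ x) := by
  have hpoch : qPochInf (q ^ x) q = (1 - q ^ x) * qPochInf (q ^ (x + 1)) q := by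
    rw [Real.rpow_add_one hq0.ne']
    exact qPochInf_eq_mul (by rwa [abs_of_pos hq0])
  have hpow : (1 - q) ^ (1 - x) = (1 - q) ^ (1 - (x + 1)) * (1 - q) := by
    rw [← Real.rpow_add_one (sub_pos.2 hq1).ne']
    ring_nf
  have hne := qPochInf_rpow_ne_zero hq0 hq1 hx
  rw [hpoch] at hne
  have hfactor := left_ne_zero_of_mul hne
  have htail := right_ne_zero_of_mul hne
  rw [qGamma, qGamma, hpoch, hpow]
  field_simp

theorem qGamma_add_two_mul (hx : 0 < x) (n : ℕ) :
    qGamma q (x + 2 * n) * (1 - q) ^ (2 * n) =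
      qGamma q x * ∏ k ∈ Finset.range n, (1 - q ^ (x + 2 * k)) * (1 - q ^ (x + 2 * k + 1)) := by
  induction n with
  | zero => simp
  | succ n ih =>
    have hfirst := qGamma_add_one hq0 hq1 (x := x + 2 * n) (by positivity)
    have hsecond := qGamma_add_one hq0 hq1 (x := x + 2 * n + 1) (by positivity)
    have hshift : x + 2 * ((n + 1 : ℕ) : ℝ) = x + 2 * n + 1 + 1 := by push_cast; ring
    rw [hshift, Finset.prod_range_succ, ← mul_assoc, ← ih]
    linear_combination (1 - q) ^ (2 * n + 1) * hsecond +
      (1 - q) ^ (2 * n) * (1 - q ^ (x + 2 * n + 1)) * hfirst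

end QGamma

section QML

theorem qML_neg (γ σ q : ℝ) (z : ℂ) : qML γ σ q (-z) = qML γ σ q z := by
  simp only [qML, (even_two_mul _).neg_pow]

variable {q γ : ℝ}

theorem one_sub_rpow_mul_one_sub_rpow (hγ : γ = 0 ∨ γ = 1) (k : ℕ) :
    (1 - q ^ (γ + 1 + 2 * k)) * (1 - q ^ (γ + 1 + 2 * k + 1)) =
      (1 - q ^ (2 * γ + 1) * (q ^ 2) ^ k) * (1 - (q ^ 2) ^ (k + 1)) := by
  have hrpow (m : ℕ) {y : ℝ} (hy : y = m) : q ^ y = q ^ m := by rw [hy, Real.rpow_natCast]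
  rcases hγ with rfl | rfl
  · rw [hrpow (2 * k + 1) (by push_cast; ring), hrpow (2 * k + 2) (by push_cast; ring),
      hrpow 1 (by norm_num)]
    ring
  · rw [hrpow (2 * k + 2) (by push_cast; ring), hrpow (2 * k + 3) (by push_cast; ring),
      hrpow 3 (by norm_num)]
    ring

variable (hq0 : 0 < q) (hq1 : q < 1) (hγ : γ = 0 ∨ γ = 1)
include hq0 hq1 hγ

theorem div_qGamma_eq_qPhiCoeff (σ : ℝ) (n : ℕ) :
    (-1) ^ n * σ ^ (2 * n) * q ^ (n * (n - 1)) / qGamma q (2 * n + γ + 1) =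
      (qGamma q (γ + 1))⁻¹ *
        (qPhiCoeff (q ^ (2 * γ + 1)) (q ^ 2) n * (σ * (1 - q)) ^ (2 * n)) := by
  have hγ0 : 0 ≤ γ := by rcases hγ with rfl | rfl <;> norm_num
  have hq2 : (q ^ 2) ^ n.choose 2 = q ^ (n * (n - 1)) := by
    rw [← pow_mul, Nat.choose_two_right, Nat.mul_div_cancel' (Nat.even_mul_pred_self n).two_dvd]
  have hGamma := qGamma_add_two_mul hq0 hq1 (x := γ + 1) (by positivity) n
  simp only [one_sub_rpow_mul_one_sub_rpow hγ] at hGamma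
  have hpow : (1 - q) ^ (2 * n) ≠ 0 := pow_ne_zero _ (sub_pos.2 hq1).ne'
  have hx : 2 * (n : ℝ) + γ + 1 = γ + 1 + 2 * n := by ring
  rw [hx, qPhiCoeff, hq2, mul_pow, ← mul_div_right_comm, ← div_eq_inv_mul, div_div,
    mul_comm _ (qGamma q (γ + 1)), ← hGamma, ← mul_assoc, mul_div_mul_right _ _ hpow]
  ring

theorem qML_eq_qPhi (σ : ℝ) (z : ℂ) :
    qML γ σ q z = (qGamma q (γ + 1) : ℂ)⁻¹ *
      qPhi (q ^ (2 * γ + 1) : ℝ) (q ^ 2 : ℝ) (((σ * (1 - q) : ℝ) * z) ^ 2) := by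
  rw [qML, qPhi, ← tsum_mul_left]
  refine tsum_congr fun n => ?_
  rw [div_qGamma_eq_qPhiCoeff hq0 hq1 hγ, ← ofReal_qPhiCoeff, ← pow_mul, mul_pow _ z,
    Complex.ofReal_mul, Complex.ofReal_mul, Complex.ofReal_inv, Complex.ofReal_pow]
  simp only [mul_assoc]

theorem rpow_two_mul_add_one_mem_Ioo : q ^ (2 * γ + 1) ∈ Set.Ioo 0 1 := by
  have hγ0 : 0 ≤ γ := by rcases hγ with rfl | rfl <;> norm_num
  exact ⟨Real.rpow_pos_of_pos hq0 _, Real.rpow_lt_one hq0.le hq1 (by positivity)⟩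

theorem inv_qGamma_add_one_ne_zero : (qGamma q (γ + 1) : ℂ)⁻¹ ≠ 0 := by
  have hγ0 : 0 ≤ γ := by rcases hγ with rfl | rfl <;> norm_num
  exact inv_ne_zero (Complex.ofReal_ne_zero.2 (qGamma_ne_zero hq0 hq1 (by positivity)))

theorem qML_eq_zero_iff {σ : ℝ} {z : ℂ} :
    qML γ σ q z = 0 ↔
      qPhi (q ^ (2 * γ + 1) : ℝ) (q ^ 2 : ℝ) (((σ * (1 - q) : ℝ) * z) ^ 2) = 0 := by
  rw [qML_eq_qPhi hq0 hq1 hγ, mul_eq_zero,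
    or_iff_right (inv_qGamma_add_one_ne_zero hq0 hq1 hγ)]

theorem deriv_qML (σ : ℝ) (z : ℂ) :
    deriv (qML γ σ q) z = (qGamma q (γ + 1) : ℂ)⁻¹ *
      (deriv (qPhi (q ^ (2 * γ + 1) : ℝ) (q ^ 2 : ℝ)) (((σ * (1 - q) : ℝ) * z) ^ 2) *
        (2 * ((σ * (1 - q) : ℝ) * z) * (σ * (1 - q) : ℝ))) := by
  obtain ⟨hb0, hb1⟩ := rpow_two_mul_add_one_mem_Ioo hq0 hq1 hγ
  have hp := norm_ofReal_lt_one (pow_pos hq0 2) (pow_lt_one₀ hq0.le hq1 two_ne_zero)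
  have hqPhi := differentiable_qPhi (mul_pow_ne_one (norm_ofReal_lt_one hb0 hb1) hp.le) hp
    (Complex.ofReal_ne_zero.2 (pow_pos hq0 2).ne')
  set κ : ℂ := ((σ * (1 - q) : ℝ) : ℂ)
  have hsq : HasDerivAt (fun z => (κ * z) ^ 2) (2 * (κ * z) * κ) z := by
    simpa using ((hasDerivAt_id z).const_mul κ).fun_pow 2
  rw [funext (qML_eq_qPhi hq0 hq1 hγ σ)]
  exact (((hqPhi _).hasDerivAt.comp z hsq).const_mul _).deriv

end QML

theorem stmt1 (q σ γ : ℝ) (hq0 : 0 < q) (hq1 : q < 1) (hσ : 0 < σ)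
    (hγ : γ = 0 ∨ γ = 1) :
    ∀ z : ℂ, qML γ σ q z = 0 →
      z.im = 0 ∧ deriv (qML γ σ q) z ≠ 0 ∧ qML γ σ q (-z) = 0 := by
  intro z hz
  have hκ : σ * (1 - q) ≠ 0 := (mul_pos hσ (sub_pos.2 hq1)).ne'
  obtain ⟨hb0, hb1⟩ := rpow_two_mul_add_one_mem_Ioo hq0 hq1 hγ
  have hp0 : 0 < q ^ 2 := pow_pos hq0 2
  have hp1 : q ^ 2 < 1 := pow_lt_one₀ hq0.le hq1 two_ne_zero
  have hw := (qML_eq_zero_iff hq0 hq1 hγ).1 hz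
  have hpos : 0 < ((σ * (1 - q) : ℝ) * z) ^ 2 := pos_of_qPhi_eq_zero hb0 hb1 hp0 hp1 hw
  refine ⟨?_, ?_, (qML_neg γ σ q z).trans hz⟩
  · have him := Complex.sq_nonneg_iff.1 hpos.le
    rw [Complex.im_ofReal_mul] at him
    exact (mul_eq_zero.1 him).resolve_left hκ
  · have hz0 : (σ * (1 - q) : ℝ) * z ≠ 0 := (pow_ne_zero_iff two_ne_zero).1 hpos.ne'
    rw [deriv_qML hq0 hq1 hγ]
    exact mul_ne_zero (inv_qGamma_add_one_ne_zero hq0 hq1 hγ)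
      (mul_ne_zero (deriv_qPhi_ne_zero_of_eq_zero hb0 hb1 hp0 hp1 hw)
        (mul_ne_zero (mul_ne_zero two_ne_zero hz0) (Complex.ofReal_ne_zero.2 hκ)))
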